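/- arXiv:2102.11808 — 6 statements merged into one kernel-verified Lean document; each statement's English description precedes it below -/
import Mathlib

section
/- Let a, b ∈ ℤ with b·(a² − 4b) ≠ 0 and let q be an odd prime not dividing b·(a² − 4b). Then: (i) if q ≡ 1 (mod 4) and neither b̄ nor ā² − 4b̄ is a square in 𝔽_q, then a_q ≡ 0 (mod 4); (ii) if q ≡ 3 (mod 4) and at least one of b̄, ā² − 4b̄ is a square in 𝔽_q, then a_q ≡ 0 (mod 4); (iii) if q ≡ 1 (mod 4) and at least one of b̄, ā² − 4b̄ is a square in 𝔽_q, then a_q ≡ 2 (mod 4); (iv) if q ≡ 3 (mod 4) and neither b̄ nor ā² − 4b̄ is a square in 𝔽_q, then a_q ≡ 2 (mod 4). -/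
/-!
Put `f x = x³ + a x² + b x`, `D = a² - 4b` and let `χ` be the quadratic character of `𝔽_q`.
A point of the curve is the point at infinity, a point `(x, 0)` with `f x = 0`, or one of two
points over an `x` with `χ (f x) = 1`. Hence
`#E = 1 + #{x | f x = 0} + 2 · #{x | χ (f x) = 1}` (`card_point`).

* `#{x | f x = 0}` is `3` if `D` is a square and `1` otherwise.
* Translation by the 2-torsion point `(0, 0)` acts on `x`-coordinates by `x ↦ b / x`, and
  `f (b / x) = (b / x²)² · f x`. So this involution preserves `{x | χ (f x) = 1}`, and the parity
  of that set is the parity of its set of fixed points, those with `x² = b`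
  (`card_char_one_mod_two`).
* If `b` is not a square there are no fixed points. If `b = r²` then `f (±r) = r² (a ± 2r)`, and
  `(a + 2r)(a - 2r) = D`, so exactly one of `±r` is a fixed point if `D` is not a square, and both
  or neither are if `D` is a square.

Together: `#E` is divisible by `4` if `b` or `D` is a square, and is `2` modulo `4` otherwise.
-/

/-- The elliptic curve `E_{a,b} : y² = x³ + a·x² + b·x` as a Weierstrass curve
in affine coordinates. -/
def Eab {F : Type*} [CommRing F] (a b : F) : WeierstrassCurve.Affine F :=
  { a₁ := 0, a₂ := a, a₃ := 0, a₄ := b, a₆ := 0 }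

/-- The trace of Frobenius `a_q = q + 1 - #Ē_{a,b}(𝔽_q)` of the reduction of
`E_{a,b}` modulo `q`. -/
noncomputable def aq (a b : ℤ) (q : ℕ) : ℤ :=
  (q : ℤ) + 1 - (Nat.card (Eab (a : ZMod q) (b : ZMod q)).Point : ℤ)

section PointCount

/-- The right-hand side of the equation `y² = x³ + a x² + b x`. -/
def cubicRHS {F : Type*} [Field F] (a b x : F) : F := x ^ 3 + a * x ^ 2 + b * x

lemma eab_nonsingular_iff {F : Type*} [Field F] (h2 : (2 : F) ≠ 0) {a b : F} (hb : b ≠ 0)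
    (hD : a ^ 2 - 4 * b ≠ 0) (x y : F) :
    (Eab a b).Nonsingular x y ↔ y ^ 2 = cubicRHS a b x := by
  have hΔ : (Eab a b).Δ ≠ 0 := by
    have : (Eab a b).Δ = 2 ^ 4 * b ^ 2 * (a ^ 2 - 4 * b) := by
      simp only [Eab, WeierstrassCurve.Δ, WeierstrassCurve.b₂, WeierstrassCurve.b₄,
        WeierstrassCurve.b₆, WeierstrassCurve.b₈]
      ring
    rw [this]
    positivity
  rw [← WeierstrassCurve.Affine.equation_iff_nonsingular_of_Δ_ne_zero hΔ,
    WeierstrassCurve.Affine.equation_iff]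
  simp [Eab, cubicRHS]

variable {F : Type*} [Field F] [Fintype F] [DecidableEq F]

lemma card_point (hF : ringChar F ≠ 2) {a b : F} (hb : b ≠ 0) (hD : a ^ 2 - 4 * b ≠ 0) :
    Nat.card (Eab a b).Point = 1 + Finset.card {x : F | cubicRHS a b x = 0} +
      2 * Finset.card {x : F | quadraticChar F (cubicRHS a b x) = 1} := by
  have h2 : (2 : F) ≠ 0 := Ring.two_ne_zero hF
  have e : (Eab a b).Point ≃ Option (Σ x : F, {y : F // y ^ 2 = cubicRHS a b x}) :=
    (WeierstrassCurve.Affine.nonsingularPointEquiv (W' := Eab a b)).trans <| Equiv.optionCongr <|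
      (Equiv.subtypeEquivRight fun xy => eab_nonsingular_iff h2 hb hD xy.1 xy.2).trans
      { toFun := fun p => ⟨p.1.1, p.1.2, p.2⟩
        invFun := fun p => ⟨(p.1, p.2.1), p.2.2⟩
        left_inv := fun _ => rfl
        right_inv := fun _ => rfl }
  have hfib (x : F) : (Fintype.card {y : F // y ^ 2 = cubicRHS a b x} : ℤ) =
      (if cubicRHS a b x = 0 then 1 else 0) +
        2 * (if quadraticChar F (cubicRHS a b x) = 1 then 1 else 0) := by
    have h := quadraticChar_card_sqrts hF (cubicRHS a b x)
    rw [Set.toFinset_card] at h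
    have h' : (Fintype.card {y : F // y ^ 2 = cubicRHS a b x} : ℤ) =
      quadraticChar F (cubicRHS a b x) + 1 := by
        rw [← h]; congr 1
    rw [h']
    by_cases h0 : cubicRHS a b x = 0
    · simp [h0]
    · rcases quadraticChar_dichotomy h0 with h1 | h1 <;> simp [h0, h1]
  rw [Nat.card_congr e, Nat.card_eq_fintype_card, Fintype.card_option, Fintype.card_sigma]
  zify
  simp_rw [hfib, Finset.sum_add_distrib, ← Finset.mul_sum, Finset.sum_boole]
  ring

/-- The involution `x ↦ b / x` pairs off the elements with `x² ≠ b`. -/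
lemma card_char_one_mod_two {a b : F} (hb : b ≠ 0) :
    Finset.card {x : F | quadraticChar F (cubicRHS a b x) = 1} % 2 =
      Finset.card {x : F | quadraticChar F (cubicRHS a b x) = 1 ∧ x ^ 2 = b} % 2 := by
  have hne {x : F} (hx : quadraticChar F (cubicRHS a b x) = 1) : x ≠ 0 := by
    rintro rfl
    simp [cubicRHS] at hx
  have key : ((Finset.card {x : F | quadraticChar F (cubicRHS a b x) = 1 ∧ ¬ x ^ 2 = b} : ℕ) :
      ZMod 2) = 0 := by
    rw [Finset.card_eq_sum_ones, Nat.cast_sum]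
    refine Finset.sum_involution (fun x _ => b / x) (fun _ _ => by decide) ?_ ?_ ?_
    · intro x hx _ h
      simp only [Finset.mem_filter, Finset.mem_univ, true_and] at hx
      rw [div_eq_iff (hne hx.1)] at h
      exact hx.2 (by rw [h]; ring)
    · intro x hx
      simp only [Finset.mem_filter, Finset.mem_univ, true_and] at hx ⊢
      have hx0 := hne hx.1
      refine ⟨?_, fun h => hx.2 ?_⟩
      · have : cubicRHS a b (b / x) = (b / x ^ 2) ^ 2 * cubicRHS a b x := by
          unfold cubicRHS
          field_simp
          ring
        rw [this, map_mul, hx.1, quadraticChar_sq_one' (by positivity), one_mul]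
      · field_simp at h
        exact h.symm
    · intro x hx
      simp only [Finset.mem_filter, Finset.mem_univ, true_and] at hx
      have hx0 := hne hx.1
      field_simp
  rw [ZMod.natCast_eq_zero_iff] at key
  have hsplit := Finset.card_filter_add_card_filter_not
    (s := ({x : F | quadraticChar F (cubicRHS a b x) = 1} : Finset F)) (fun x => x ^ 2 = b)
  rw [Finset.filter_filter, Finset.filter_filter] at hsplit
  omega

lemma card_roots_of_isSquare (h2 : (2 : F) ≠ 0) {a b : F} (hb : b ≠ 0)
    (hD : a ^ 2 - 4 * b ≠ 0) (hs : IsSquare (a ^ 2 - 4 * b)) :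
    Finset.card {x : F | cubicRHS a b x = 0} = 3 := by
  obtain ⟨s, hs⟩ := hs
  have hs0 : s ≠ 0 := by
    rintro rfl
    simp_all
  refine Finset.card_eq_three.2 ⟨0, (-a + s) / 2, (-a - s) / 2, ?_, ?_, ?_, ?_⟩
  · intro h
    have h4 : (2 * 2) * b = 0 := by
      field_simp at h
      linear_combination (-1 : F) * hs + (a + s) * h
    exact mul_ne_zero (mul_ne_zero h2 h2) hb h4
  · intro h
    have h4 : (2 * 2) * b = 0 := by
      field_simp at h
      linear_combination (-1 : F) * hs + (a - s) * h
    exact mul_ne_zero (mul_ne_zero h2 h2) hb h4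
  · intro h
    field_simp at h
    exact mul_ne_zero h2 hs0 (by linear_combination h)
  · ext x
    have hf : 2 * 2 * cubicRHS a b x = x * ((2 * x - (-a + s)) * (2 * x - (-a - s))) := by
      unfold cubicRHS
      linear_combination (-x) * hs
    have : cubicRHS a b x = 0 ↔ x * ((2 * x - (-a + s)) * (2 * x - (-a - s))) = 0 := by
      rw [← hf]
      simp [h2]
    simp only [Finset.mem_filter, Finset.mem_univ, true_and, Finset.mem_insert,
      Finset.mem_singleton, this, mul_eq_zero, sub_eq_zero, eq_div_iff h2, mul_comm x 2]

lemma card_roots_of_not_isSquare {a b : F} (hs : ¬ IsSquare (a ^ 2 - 4 * b)) :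
    Finset.card {x : F | cubicRHS a b x = 0} = 1 := by
  refine Finset.card_eq_one.2 ⟨0, ?_⟩
  ext x
  simp only [Finset.mem_filter, Finset.mem_univ, true_and, Finset.mem_singleton]
  refine ⟨fun h => by_contra fun hx => hs ⟨2 * x + a, ?_⟩, fun h => by simp [h, cubicRHS]⟩
  have : x ^ 2 + a * x + b = 0 := by
    refine (mul_eq_zero.1 ?_).resolve_left hx
    rw [← h, cubicRHS]
    ring
  linear_combination (-4 : F) * this

/-- The fixed points of `x ↦ b / x` on `{x | χ (f x) = 1}` when `b = r²`. -/
lemma card_fixed {a r : F} (h2 : (2 : F) ≠ 0) (hr : r ≠ 0) :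
    Finset.card {x : F | quadraticChar F (cubicRHS a (r ^ 2) x) = 1 ∧ x ^ 2 = r ^ 2} =
      (if quadraticChar F (a + 2 * r) = 1 then 1 else 0) +
        (if quadraticChar F (a - 2 * r) = 1 then 1 else 0) := by
  have hrr : r ≠ -r := fun h => mul_ne_zero h2 hr (by linear_combination h)
  have hp : quadraticChar F (cubicRHS a (r ^ 2) r) = quadraticChar F (a + 2 * r) := by
    rw [show cubicRHS a (r ^ 2) r = r ^ 2 * (a + 2 * r) by unfold cubicRHS; ring, map_mul,
      quadraticChar_sq_one' hr, one_mul]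
  have hm : quadraticChar F (cubicRHS a (r ^ 2) (-r)) = quadraticChar F (a - 2 * r) := by
    rw [show cubicRHS a (r ^ 2) (-r) = r ^ 2 * (a - 2 * r) by unfold cubicRHS; ring, map_mul,
      quadraticChar_sq_one' hr, one_mul]
  have hset : ({x : F | quadraticChar F (cubicRHS a (r ^ 2) x) = 1 ∧ x ^ 2 = r ^ 2} : Finset F) =
      ({r, -r} : Finset F).filter fun x => quadraticChar F (cubicRHS a (r ^ 2) x) = 1 := by
    ext x
    simp only [Finset.mem_filter, Finset.mem_univ, true_and, Finset.mem_insert,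
      Finset.mem_singleton, sq_eq_sq_iff_eq_or_eq_neg]
    tauto
  rw [hset, Finset.card_filter, Finset.sum_pair hrr, hp, hm]

lemma card_point_mod_four (hF : ringChar F ≠ 2) {a b : F} (hb : b ≠ 0)
    (hD : a ^ 2 - 4 * b ≠ 0) :
    (IsSquare b ∨ IsSquare (a ^ 2 - 4 * b) → Nat.card (Eab a b).Point % 4 = 0) ∧
    (¬ IsSquare b → ¬ IsSquare (a ^ 2 - 4 * b) → Nat.card (Eab a b).Point % 4 = 2) := by
  have h2 : (2 : F) ≠ 0 := Ring.two_ne_zero hF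
  have hcard := card_point hF hb hD
  have hpar := card_char_one_mod_two (a := a) hb
  generalize Finset.card {x : F | quadraticChar F (cubicRHS a b x) = 1} = n at hcard hpar
  by_cases hbs : IsSquare b
  · refine ⟨fun _ => ?_, fun h => absurd hbs h⟩
    obtain ⟨r, hr⟩ := hbs
    rw [← sq] at hr
    subst hr
    have hr0 : r ≠ 0 := by
      rintro rfl
      simp at hb
    rw [card_fixed h2 hr0] at hpar
    have hDf : a ^ 2 - 4 * r ^ 2 = (a + 2 * r) * (a - 2 * r) := by ring
    have hχ : quadraticChar F (a ^ 2 - 4 * r ^ 2) =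
        quadraticChar F (a + 2 * r) * quadraticChar F (a - 2 * r) := by
      rw [hDf, map_mul]
    have hp0 : a + 2 * r ≠ 0 := fun h => hD (by rw [hDf, h, zero_mul])
    have hm0 : a - 2 * r ≠ 0 := fun h => hD (by rw [hDf, h, mul_zero])
    by_cases hs : IsSquare (a ^ 2 - 4 * r ^ 2)
    · rw [card_roots_of_isSquare h2 hb hD hs] at hcard
      rw [(quadraticChar_one_iff_isSquare hD).2 hs] at hχ
      rcases quadraticChar_dichotomy hp0 with h | h <;>
      rcases quadraticChar_dichotomy hm0 with h' | h' <;>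
      simp [h, h'] at hχ hpar <;> omega
    · rw [card_roots_of_not_isSquare hs] at hcard
      rw [quadraticChar_neg_one_iff_not_isSquare.2 hs] at hχ
      rcases quadraticChar_dichotomy hp0 with h | h <;>
      rcases quadraticChar_dichotomy hm0 with h' | h' <;>
      simp [h, h'] at hχ hpar <;> omega
  · have h0 : Finset.card {x : F | quadraticChar F (cubicRHS a b x) = 1 ∧ x ^ 2 = b} = 0 := by
      rw [Finset.card_eq_zero, Finset.filter_eq_empty_iff]
      rintro x - ⟨-, hx⟩
      exact hbs ⟨x, by rw [← hx, sq]⟩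
    rw [h0] at hpar
    by_cases hs : IsSquare (a ^ 2 - 4 * b)
    · rw [card_roots_of_isSquare h2 hb hD hs] at hcard
      exact ⟨fun _ => by omega, fun _ h => absurd hs h⟩
    · rw [card_roots_of_not_isSquare hs] at hcard
      exact ⟨fun h => (h.elim hbs hs).elim, fun _ _ => by omega⟩

end PointCount

/-- Proposition 2.2: the congruence class of `a_q` modulo 4 in the four cases. -/
theorem stmt1 (a b : ℤ) (q : ℕ) (hq : q.Prime) (hq2 : q ≠ 2)
    (hgood : ¬ (q : ℤ) ∣ b * (a ^ 2 - 4 * b)) :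
    (q % 4 = 1 → ¬ IsSquare ((b : ZMod q)) →
      ¬ IsSquare ((a : ZMod q) ^ 2 - 4 * (b : ZMod q)) → aq a b q ≡ 0 [ZMOD 4]) ∧
    (q % 4 = 3 → (IsSquare ((b : ZMod q)) ∨ IsSquare ((a : ZMod q) ^ 2 - 4 * (b : ZMod q))) →
      aq a b q ≡ 0 [ZMOD 4]) ∧
    (q % 4 = 1 → (IsSquare ((b : ZMod q)) ∨ IsSquare ((a : ZMod q) ^ 2 - 4 * (b : ZMod q))) →
      aq a b q ≡ 2 [ZMOD 4]) ∧
    (q % 4 = 3 → ¬ IsSquare ((b : ZMod q)) →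
      ¬ IsSquare ((a : ZMod q) ^ 2 - 4 * (b : ZMod q)) → aq a b q ≡ 2 [ZMOD 4]) := by
  have : Fact q.Prime := ⟨hq⟩
  have hF : ringChar (ZMod q) ≠ 2 := by rwa [ZMod.ringChar_zmod_n]
  rw [← ZMod.intCast_zmod_eq_zero_iff_dvd] at hgood
  push_cast at hgood
  obtain ⟨hsq, hns⟩ := card_point_mod_four hF (left_ne_zero_of_mul hgood)
    (right_ne_zero_of_mul hgood)
  unfold aq Int.ModEq
  refine ⟨fun h h1 h2 => ?_, fun h h1 => ?_, fun h h1 => ?_, fun h h1 h2 => ?_⟩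
  · have := hns h1 h2
    omega
  · have := hsq h1
    omega
  · have := hsq h1
    omega
  · have := hns h1 h2
    omega
end

section
/- Let F be a finite field of odd cardinality and a, b ∈ F with b·(a² − 4b) ≠ 0. Then the cardinality of E_{a,b}(F) is even, and #E_{a,b}(F) ≡ 2 (mod 4) if and only if neither b nor a² − 4b is a square in F; equivalently, 4 divides #E_{a,b}(F) if and only if b or a² − 4b is a square in F. -/
theorem four_dvd_card_iff {G : Type*} [AddCommGroup G] [Finite G] {T : G}
    (hT : addOrderOf T = 2) :
    4 ∣ Nat.card G ↔ ∃ Q : G, Q ≠ 0 ∧ Q ≠ T ∧ (Q + Q = 0 ∨ Q + Q = T) := by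
  have hTT : T + T = 0 := by
    rw [← two_nsmul, ← hT, addOrderOf_nsmul_eq_zero]
  have hmem (Q : G) : Q ∈ AddSubgroup.zmultiples T ↔ Q = 0 ∨ Q = T := by
    constructor
    · rintro ⟨k, rfl⟩
      rcases Int.even_or_odd' k with ⟨m, rfl | rfl⟩
      · left
        simp [mul_comm (2 : ℤ) m, mul_smul, two_zsmul, hTT]
      · right
        simp [mul_comm (2 : ℤ) m, add_smul, mul_smul, two_zsmul, hTT]
    · rintro (rfl | rfl)
      · exact zero_mem _
      · exact AddSubgroup.mem_zmultiples _
  have hcard : Nat.card G = Nat.card (G ⧸ AddSubgroup.zmultiples T) * 2 := by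
    rw [AddSubgroup.card_eq_card_quotient_mul_card_addSubgroup (AddSubgroup.zmultiples T),
      Nat.card_zmultiples, hT]
  have h4 : 4 ∣ Nat.card G ↔ 2 ∣ Nat.card (G ⧸ AddSubgroup.zmultiples T) := by omega
  rw [h4]
  constructor
  · intro h
    obtain ⟨q, hq⟩ := exists_prime_addOrderOf_dvd_card' 2 h
    obtain ⟨Q, rfl⟩ := QuotientAddGroup.mk_surjective q
    have h0 : ¬ Q ∈ AddSubgroup.zmultiples T := by
      rw [← QuotientAddGroup.eq_zero_iff]
      intro h
      rw [h, addOrderOf_zero] at hq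
      omega
    have h2 : Q + Q ∈ AddSubgroup.zmultiples T := by
      rw [← QuotientAddGroup.eq_zero_iff, QuotientAddGroup.mk_add, ← two_nsmul, ← hq,
        addOrderOf_nsmul_eq_zero]
    rw [hmem] at h0 h2
    push Not at h0
    exact ⟨Q, h0.1, h0.2, h2⟩
  · rintro ⟨Q, h0, h1, h2⟩
    rw [← hmem, ← QuotientAddGroup.eq_zero_iff, QuotientAddGroup.mk_add, ← two_nsmul] at h2
    have h3 : (Q : G ⧸ AddSubgroup.zmultiples T) ≠ 0 := by
      rw [Ne, QuotientAddGroup.eq_zero_iff, hmem]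
      tauto
    rw [← addOrderOf_eq_prime h2 h3]
    exact addOrderOf_dvd_natCard _

section Points

variable {F : Type*} [Field F] {a b : F}

open WeierstrassCurve.Affine

theorem Eab_nonsingular_iff (h2 : (2 : F) ≠ 0) (hΔ : b * (a ^ 2 - 4 * b) ≠ 0) (x y : F) :
    (Eab a b).Nonsingular x y ↔ y ^ 2 = x * (x ^ 2 + a * x + b) := by
  rw [nonsingular_iff, equation_iff]
  simp only [Eab]
  constructor
  · rintro ⟨h, -⟩
    linear_combination h
  · intro h
    refine ⟨by linear_combination h, ?_⟩
    by_contra! hc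
    obtain ⟨hc1, hc2⟩ := hc
    have hy : y = 0 := by
      have : 2 * y = 0 := by linear_combination hc2
      simpa [h2] using this
    subst hy
    have hx : x * (x ^ 2 + a * x + b) = 0 := by linear_combination -h
    rcases mul_eq_zero.mp hx with rfl | hx
    · apply hΔ
      linear_combination (-(a ^ 2 - 4 * b)) * hc1
    · have h3 : x * (2 * x + a) = 0 := by linear_combination -hc1 - hx
      rcases mul_eq_zero.mp h3 with rfl | h3
      · apply hΔ
        linear_combination (a ^ 2 - 4 * b) * hx
      · apply hΔ
        -- the discriminant equals `(2x + a)² - 4 (x² + a x + b)`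
        linear_combination b * ((2 * x + a) * h3 - 4 * hx)

theorem Eab_negY (x y : F) : (Eab a b).negY x y = -y := by
  simp [negY, Eab]

variable [DecidableEq F]

theorem add_self_eq_zero_iff (h2 : (2 : F) ≠ 0) {x y : F} (h : (Eab a b).Nonsingular x y) :
    Point.some x y h + Point.some x y h = 0 ↔ y = 0 := by
  rw [add_eq_zero_iff_eq_neg, Point.neg_some, Point.some.injEq, Eab_negY]
  constructor
  · rintro ⟨-, hy⟩
    have : 2 * y = 0 := by linear_combination hy
    simpa [h2] using this
  · rintro rfl
    simp

/-- Since `T = -T`, the equation `2Q = T` says `Q + T = -Q`, and the line through `Q` and `T` has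
slope `y / x`. -/
theorem add_self_eq_T_iff (h2 : (2 : F) ≠ 0) (hΔ : b * (a ^ 2 - 4 * b) ≠ 0)
    (hT : (Eab a b).Nonsingular 0 0) {x y : F} (h : (Eab a b).Nonsingular x y) (hx : x ≠ 0) :
    Point.some x y h + Point.some x y h = Point.some 0 0 hT ↔ x ^ 2 = b := by
  have hxy := (Eab_nonsingular_iff h2 hΔ x y).mp h
  have hnegT : -Point.some 0 0 hT = Point.some 0 0 hT := by
    rw [Point.neg_some, Point.some.injEq, Eab_negY]
    simp
  have hiff : Point.some x y h + Point.some x y h = Point.some 0 0 hT ↔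
      Point.some x y h + Point.some 0 0 hT = -Point.some x y h := by
    rw [eq_neg_iff_add_eq_zero, add_right_comm, add_eq_zero_iff_eq_neg, hnegT]
  have hs : (Eab a b).slope x 0 y 0 = y / x := by
    rw [slope_of_X_ne hx]
    simp
  have hX : (Eab a b).addX x 0 (y / x) = b / x := by
    simp only [addX, Eab]
    field_simp
    linear_combination hxy
  rw [hiff, Point.add_of_X_ne hx, Point.neg_some, Point.some.injEq]
  simp only [hs, addY, negAddY, hX, Eab_negY]
  constructor
  · rintro ⟨h1, -⟩
    field_simp at h1
    exact h1.symm
  · intro hb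
    have hbx : b / x = x := by
      rw [← hb]
      field_simp
    simp [hbx]

end Points

/-- Point-counting dichotomy over a finite field of odd cardinality. -/
theorem stmt3 (F : Type*) [Field F] [Fintype F] (hodd : Odd (Fintype.card F))
    (a b : F) (hΔ : b * (a ^ 2 - 4 * b) ≠ 0) :
    Even (Nat.card (Eab a b).Point) ∧
    (Nat.card (Eab a b).Point % 4 = 2 ↔ ¬ IsSquare b ∧ ¬ IsSquare (a ^ 2 - 4 * b)) ∧
    (4 ∣ Nat.card (Eab a b).Point ↔ (IsSquare b ∨ IsSquare (a ^ 2 - 4 * b))) := by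
  classical
  have h2 : (2 : F) ≠ 0 := by
    apply Ring.two_ne_zero
    intro h
    have := FiniteField.even_card_iff_char_two.mp h
    rw [Nat.odd_iff] at hodd
    omega
  have hb : b ≠ 0 := left_ne_zero_of_mul hΔ
  have hd : a ^ 2 - 4 * b ≠ 0 := right_ne_zero_of_mul hΔ
  have hns := Eab_nonsingular_iff h2 hΔ
  have hT : (Eab a b).Nonsingular 0 0 := (hns 0 0).mpr (by ring)
  have : Finite (Eab a b).Point := by
    -- `WithZero` is `Option` by definition
    have : Finite (WithZero {xy : F × F // (Eab a b).Nonsingular xy.1 xy.2}) :=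
      inferInstanceAs (Finite (Option _))
    exact Finite.of_equiv _ (Eab a b).nonsingularPointEquiv.symm
  have hT2 : addOrderOf (WeierstrassCurve.Affine.Point.some 0 0 hT) = 2 := by
    apply addOrderOf_eq_prime
    · rw [two_nsmul, add_self_eq_zero_iff h2]
    · exact WeierstrassCurve.Affine.Point.some_ne_zero hT
  have heven : 2 ∣ Nat.card (Eab a b).Point := hT2 ▸ addOrderOf_dvd_natCard _
  have key : 4 ∣ Nat.card (Eab a b).Point ↔ (IsSquare b ∨ IsSquare (a ^ 2 - 4 * b)) := by
    rw [four_dvd_card_iff hT2]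
    constructor
    · rintro ⟨Q, hQ0, hQT, hQ⟩
      rcases Q with _ | ⟨x, y, h⟩
      · exact absurd rfl hQ0
      have hxy := (hns x y).mp h
      have hx : x ≠ 0 := by
        rintro rfl
        have : y = 0 := by simpa using hxy
        subst this
        exact hQT rfl
      rcases hQ with hQ | hQ
      · right
        rw [add_self_eq_zero_iff h2] at hQ
        subst hQ
        have h3 : x ^ 2 + a * x + b = 0 := by simpa [hx] using hxy
        exact ⟨2 * x + a, by linear_combination -4 * h3⟩
      · left
        rw [add_self_eq_T_iff h2 hΔ hT h hx] at hQ
        exact ⟨x, by rw [← hQ, sq]⟩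
    · have hfull : IsSquare (a ^ 2 - 4 * b) → ∃ Q : (Eab a b).Point, Q ≠ 0 ∧
          Q ≠ .some 0 0 hT ∧ (Q + Q = 0 ∨ Q + Q = .some 0 0 hT) := by
        rintro ⟨d, hd'⟩
        have hroot : ((-a + d) / 2) ^ 2 + a * ((-a + d) / 2) + b = 0 := by
          field_simp
          linear_combination -hd'
        have h : (Eab a b).Nonsingular ((-a + d) / 2) 0 := (hns _ _).mpr (by rw [hroot]; ring)
        refine ⟨.some _ _ h, WeierstrassCurve.Affine.Point.some_ne_zero h, ?_,
          Or.inl ((add_self_eq_zero_iff h2 h).mpr rfl)⟩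
        intro he
        rw [WeierstrassCurve.Affine.Point.some.injEq] at he
        rw [he.1] at hroot
        exact hb (by linear_combination hroot)
      have hfour (c : F) (hc : c ^ 2 = b) (hs : IsSquare (a + 2 * c)) :
          ∃ Q : (Eab a b).Point, Q ≠ 0 ∧
          Q ≠ .some 0 0 hT ∧ (Q + Q = 0 ∨ Q + Q = .some 0 0 hT) := by
        obtain ⟨e, he⟩ := hs
        have hc0 : c ≠ 0 := by
          rintro rfl
          exact hb (by rw [← hc]; ring)
        have h : (Eab a b).Nonsingular c (c * e) :=
          (hns _ _).mpr (by linear_combination -c ^ 2 * he + c * hc)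
        refine ⟨.some _ _ h, WeierstrassCurve.Affine.Point.some_ne_zero h, ?_,
          Or.inr ((add_self_eq_T_iff h2 hΔ hT h hc0).mpr hc)⟩
        intro h'
        rw [WeierstrassCurve.Affine.Point.some.injEq] at h'
        exact hc0 h'.1
      rintro (⟨c, hc⟩ | h)
      · by_cases h1 : IsSquare (a + 2 * c)
        · exact hfour c (by rw [hc, sq]) h1
        by_cases h3 : IsSquare (a + 2 * -c)
        · exact hfour (-c) (by rw [hc]; ring) h3
        -- in a finite field the product of two nonsquares is a square
        apply hfull
        have hprod : a ^ 2 - 4 * b = (a + 2 * c) * (a + 2 * -c) := by rw [hc]; ring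
        rw [← quadraticChar_neg_one_iff_not_isSquare] at h1 h3
        rw [← quadraticChar_one_iff_isSquare hd, hprod, map_mul, h1, h3]
        norm_num
      · exact hfull h
  refine ⟨even_iff_two_dvd.mpr heven, ?_, key⟩
  rw [← not_or, ← key]
  omega
end

section
/- Let p be a prime with p ≡ 3 (mod 4), and let m be a nonzero integer not divisible by p. Assume that every odd prime ℓ dividing m satisfies legendreSym ℓ (−p) = 1, and that if m is even then p ≡ 7 (mod 8). Then legendreSym p m = 1 if m > 0, and legendreSym p m = −1 if m < 0. -/
/-!
For `p ≡ 3 (mod 4)`, quadratic reciprocity reads `(ℓ/p) = (-p/ℓ)` for every odd prime `ℓ`, and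
`(2/p) = 1` when `p ≡ 7 (mod 8)`. Under the hypotheses every prime factor of `m` is therefore a
square modulo `p`, so multiplicativity gives `(|m|/p) = 1`. The sign of `m` is accounted for by
`(-1/p) = -1`.
-/

theorem legendreSym_eq_legendreSym_neg (p ℓ : ℕ) [Fact p.Prime] [Fact ℓ.Prime]
    (hp4 : p % 4 = 3) (hl2 : ℓ ≠ 2) : legendreSym p ℓ = legendreSym ℓ (-(p : ℤ)) := by
  have hp2 : p ≠ 2 := by omega
  rw [legendreSym.at_neg hl2]
  have hodd : ℓ % 2 = 1 := (Nat.Prime.mod_two_eq_one_iff_ne_two Fact.out).mpr hl2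
  rcases (by omega : ℓ % 4 = 1 ∨ ℓ % 4 = 3) with h | h
  · rw [ZMod.χ₄_nat_one_mod_four h, one_mul]
    exact legendreSym.quadratic_reciprocity_one_mod_four h hp2
  · rw [ZMod.χ₄_nat_three_mod_four h, neg_one_mul]
    exact legendreSym.quadratic_reciprocity_three_mod_four h hp4

theorem legendreSym_natCast_eq_one_of_primes (p : ℕ) [Fact p.Prime] (n : ℕ) (hn : n ≠ 0)
    (h : ∀ ℓ : ℕ, ℓ.Prime → ℓ ∣ n → legendreSym p ℓ = 1) : legendreSym p n = 1 := by
  induction n using Nat.recOnMul with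
  | zero => exact absurd rfl hn
  | one => simp
  | prime q hq => exact h q hq dvd_rfl
  | mul a b iha ihb =>
    rw [Nat.cast_mul, legendreSym.mul,
      iha (left_ne_zero_of_mul hn) fun ℓ hl hd => h ℓ hl (hd.mul_right b),
      ihb (right_ne_zero_of_mul hn) fun ℓ hl hd => h ℓ hl (hd.mul_left a), one_mul]

/-- Lemma 4.7 (quadratic-reciprocity computation): if every odd prime factor of `m`
splits in `ℚ(√-p)` and (when `m` is even) `p ≡ 7 (mod 8)`, then `(m/p) = 1` for
`m > 0` and `(m/p) = -1` for `m < 0`. -/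
theorem stmt6 (p : ℕ) (hp : p.Prime) (hp4 : p % 4 = 3) (m : ℤ) (hm : m ≠ 0)
    (hpm : ¬ (p : ℤ) ∣ m)
    (hsplit : ∀ ℓ : ℕ, ∀ hl : ℓ.Prime, ℓ ≠ 2 → (ℓ : ℤ) ∣ m →
      @legendreSym ℓ ⟨hl⟩ (-(p : ℤ)) = 1)
    (heven : Even m → p % 8 = 7) :
    (0 < m → @legendreSym p ⟨hp⟩ m = 1) ∧ (m < 0 → @legendreSym p ⟨hp⟩ m = -1) := by
  haveI : Fact p.Prime := ⟨hp⟩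
  have hp2 : p ≠ 2 := by omega
  have habs : legendreSym p (m.natAbs : ℤ) = 1 := by
    refine legendreSym_natCast_eq_one_of_primes p _ (Int.natAbs_ne_zero.mpr hm) fun ℓ hl hd => ?_
    have hdm : (ℓ : ℤ) ∣ m := Int.natCast_dvd.mpr hd
    rcases eq_or_ne ℓ 2 with rfl | hl2
    · have h8 : p % 8 = 7 := heven (even_iff_two_dvd.mpr (by exact_mod_cast hdm))
      have h2 : legendreSym p 2 = 1 := by
        rw [legendreSym.at_two hp2, ZMod.χ₈_nat_eq_if_mod_eight, if_neg (by omega),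
          if_pos (Or.inr h8)]
      exact_mod_cast h2
    · haveI : Fact ℓ.Prime := ⟨hl⟩
      rw [legendreSym_eq_legendreSym_neg p ℓ hp4 hl2]
      exact hsplit ℓ hl hl2 hdm
  refine ⟨fun hpos => ?_, fun hneg => ?_⟩
  · rwa [Int.natAbs_of_nonneg hpos.le] at habs
  · rw [Int.ofNat_natAbs_of_nonpos hneg.le, legendreSym.at_neg hp2,
      ZMod.χ₄_nat_three_mod_four hp4] at habs
    linarith
end

section
/- Let a, b ∈ ℚ with b·(a² − 4b) ≠ 0 and suppose a² − 4b is not a square in ℚ. If E_{a,b}(ℚ) contains a point of order 4, then b is a square in ℚ. -/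
/-- A point that is its own inverse on `E_{a,b}` has zero `y`-coordinate. -/
lemma Eab_y_eq_zero_of_two_nsmul {a b x y : ℚ} (h : (Eab a b).Nonsingular x y)
    (h2 : (2 : ℕ) • (WeierstrassCurve.Affine.Point.some x y h) = 0) : y = 0 := by
  rw [two_nsmul] at h2
  by_contra hy
  have hne : y ≠ (Eab a b).negY x y := by
    simp only [WeierstrassCurve.Affine.negY, Eab]
    intro h'
    apply hy
    linarith
  rw [WeierstrassCurve.Affine.Point.add_self_of_Y_ne hne] at h2
  exact WeierstrassCurve.Affine.Point.some_ne_zero _ h2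

lemma Eab_equation {a b x y : ℚ} (h : (Eab a b).Nonsingular x y) :
    y ^ 2 = x ^ 3 + a * x ^ 2 + b * x := by
  have := (WeierstrassCurve.Affine.equation_iff _ _).1 h.1
  simp only [Eab] at this
  linarith

/-- The only rational zero of `X³ + aX² + bX` is `0` when `a² - 4b` is not a square. -/
lemma Eab_root_eq_zero {a b X : ℚ} (hd : ¬ IsSquare (a ^ 2 - 4 * b))
    (hX : X ^ 3 + a * X ^ 2 + b * X = 0) : X = 0 := by
  by_contra hX0
  have hq : X ^ 2 + a * X + b = 0 := by
    apply mul_left_cancel₀ hX0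
    linarith
  -- A root `X` of the quadratic factor exhibits the discriminant as `(2X + a)²`.
  exact hd ⟨2 * X + a, by linear_combination -4 * hq⟩

/-- Key step of Proposition 2.1: if `a² - 4b` is not a square in `ℚ` and
`E_{a,b}(ℚ)` has a point of order 4, then `b` is a square in `ℚ`. -/
theorem stmt9 (a b : ℚ) (hΔ : b * (a ^ 2 - 4 * b) ≠ 0)
    (hd : ¬ IsSquare (a ^ 2 - 4 * b))
    (h4 : ∃ P : (Eab a b).Point, addOrderOf P = 4) :
    IsSquare b := by
  obtain ⟨P, hP⟩ := h4
  have h2 : (2 : ℕ) • P ≠ 0 := by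
    intro h
    have := addOrderOf_dvd_of_nsmul_eq_zero h
    rw [hP] at this
    omega
  have h22 : (2 : ℕ) • ((2 : ℕ) • P) = 0 := by
    rw [← mul_nsmul, show 2 * 2 = addOrderOf P from hP.symm]
    exact addOrderOf_nsmul_eq_zero P
  rcases P with _ | ⟨x, y, h⟩
  · exact absurd (nsmul_zero 2) h2
  have hne : y ≠ (Eab a b).negY x y := by
    intro h'
    apply h2
    rw [two_nsmul]
    exact WeierstrassCurve.Affine.Point.add_self_of_Y_eq h'
  have hy : y ≠ 0 := by
    rintro rfl
    simp [WeierstrassCurve.Affine.negY, Eab] at hne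
  rw [two_nsmul (WeierstrassCurve.Affine.Point.some x y h),
    WeierstrassCurve.Affine.Point.add_self_of_Y_ne hne] at h22
  have hY := Eab_y_eq_zero_of_two_nsmul _ h22
  have hE := Eab_equation (WeierstrassCurve.Affine.nonsingular_add h h fun hxy => hne hxy.2)
  rw [hY, zero_pow two_ne_zero] at hE
  have hX := Eab_root_eq_zero hd hE.symm
  rw [WeierstrassCurve.Affine.slope_of_Y_ne rfl hne] at hX
  simp only [WeierstrassCurve.Affine.addX, WeierstrassCurve.Affine.negY, Eab] at hX
  have hC := Eab_equation h
  have h2y : y - (-y - 0 * x - 0) = 2 * y := by ring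
  rw [h2y] at hX
  field_simp at hX
  have hsq : (x ^ 2 - b) ^ 2 = 0 := by
    linear_combination hX + (4 * a + 8 * x) * hC
  have := pow_eq_zero_iff (two_ne_zero) |>.1 hsq
  exact ⟨x, by linarith⟩
end

section
/- Let F be a finite field of odd cardinality and a, b ∈ F with b·(a² − 4b) ≠ 0. If neither b nor a² − 4b is a square in F, then #E_{a,b}(F) ≡ 2 (mod 4). -/
/-- In characteristic two, `a² - 4b = a²` would be a square. -/
lemma two_ne_zero_of_not_isSquare {F : Type*} [Field F] {a b : F}
    (hd : ¬ IsSquare (a ^ 2 - 4 * b)) : (2 : F) ≠ 0 := by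
  intro h
  refine hd ⟨a, ?_⟩
  linear_combination (-2 * b) * h

lemma quadratic_ne_zero {F : Type*} [Field F] {a b : F}
    (hd : ¬ IsSquare (a ^ 2 - 4 * b)) (x : F) : x ^ 2 + a * x + b ≠ 0 := by
  intro h
  refine hd ⟨2 * x + a, ?_⟩
  linear_combination -4 * h

/-- The involution `x ↦ b/x` preserves the set of nonzero abscissas of rational points, and has no
fixed point because `b` is not a square. -/
lemma even_card_abscissas {F : Type*} [Field F] [Fintype F] [DecidableEq F] {a b : F}
    (hb : ¬ IsSquare b) :
    Even (Finset.univ.filter fun x : F =>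
      x ≠ 0 ∧ ∃ y : F, y ^ 2 = x ^ 3 + a * x ^ 2 + b * x).card := by
  have hb0 : b ≠ 0 := fun h => hb (h ▸ IsSquare.zero)
  rw [← ZMod.natCast_eq_zero_iff_even, Finset.cast_card]
  refine Finset.sum_involution (fun x _ => b / x) ?_ ?_ ?_ ?_
  · intro x _
    decide
  · intro x hx _ h
    have hx0 : x ≠ 0 := (Finset.mem_filter.mp hx).2.1
    rw [div_eq_iff hx0] at h
    exact hb ⟨x, h⟩
  · intro x hx
    obtain ⟨hx0, y, hy⟩ := (Finset.mem_filter.mp hx).2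
    refine Finset.mem_filter.mpr ⟨Finset.mem_univ _, div_ne_zero hb0 hx0, -(b * y / x ^ 2), ?_⟩
    field_simp
    linear_combination hy
  · intro x hx
    have hx0 : x ≠ 0 := (Finset.mem_filter.mp hx).2.1
    field_simp

lemma card_fiber {F : Type*} [Field F] [Fintype F] [DecidableEq F] {a b x : F}
    (hd : ¬ IsSquare (a ^ 2 - 4 * b)) (hx : x ≠ 0)
    (h : ∃ y : F, y ^ 2 = x ^ 3 + a * x ^ 2 + b * x) :
    (Finset.univ.filter fun y : F => y ^ 2 = x ^ 3 + a * x ^ 2 + b * x).card = 2 := by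
  obtain ⟨y, hy⟩ := h
  have hy0 : y ≠ 0 := by
    rintro rfl
    refine mul_ne_zero hx (quadratic_ne_zero hd x) ?_
    linear_combination -hy
  have hne : y ≠ -y := by
    intro h
    refine mul_ne_zero (two_ne_zero_of_not_isSquare hd) hy0 ?_
    linear_combination h
  refine (congrArg Finset.card ?_).trans (Finset.card_pair hne)
  ext z
  simp [← hy, sq_eq_sq_iff_eq_or_eq_neg]

lemma card_points_eq {F : Type*} [Field F] [Fintype F] [DecidableEq F] {a b : F}
    (hΔ : b * (a ^ 2 - 4 * b) ≠ 0) (hd : ¬ IsSquare (a ^ 2 - 4 * b)) :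
    Nat.card (Eab a b).Point =
      1 + ∑ x : F, (Finset.univ.filter fun y : F => y ^ 2 = x ^ 3 + a * x ^ 2 + b * x).card := by
  have : (Eab a b).IsElliptic := by
    refine ⟨IsUnit.mk0 _ ?_⟩
    have h2 := two_ne_zero_of_not_isSquare hd
    have h : (Eab a b).Δ = 2 ^ 4 * b * (b * (a ^ 2 - 4 * b)) := by
      simp only [Eab, WeierstrassCurve.Δ, WeierstrassCurve.b₂, WeierstrassCurve.b₄,
        WeierstrassCurve.b₆, WeierstrassCurve.b₈]
      ring
    rw [h]
    exact mul_ne_zero (mul_ne_zero (pow_ne_zero _ h2) (left_ne_zero_of_mul hΔ)) hΔ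
  have e : {xy : F × F // (Eab a b).Equation xy.1 xy.2} ≃
      Σ x : F, {y : F // y ^ 2 = x ^ 3 + a * x ^ 2 + b * x} :=
    (Equiv.subtypeEquivRight fun xy => by
      rw [WeierstrassCurve.Affine.equation_iff]; simp [Eab]).trans
      (Equiv.subtypeProdEquivSigmaSubtype fun x y : F => y ^ 2 = x ^ 3 + a * x ^ 2 + b * x)
  rw [Nat.card_congr ((Eab a b).pointEquiv.trans e.optionCongr), Finite.card_option,
    Nat.card_sigma, add_comm]
  simp [Fintype.card_subtype]

/-- Inert case of the point-counting dichotomy: if neither `b` nor `a² - 4b` is a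
square in a finite field `F` of odd cardinality, then `#E_{a,b}(F) ≡ 2 (mod 4)`. -/
theorem stmt12 (F : Type*) [Field F] [Fintype F] (hodd : Odd (Fintype.card F))
    (a b : F) (hΔ : b * (a ^ 2 - 4 * b) ≠ 0)
    (hb : ¬ IsSquare b) (hd : ¬ IsSquare (a ^ 2 - 4 * b)) :
    Nat.card (Eab a b).Point % 4 = 2 := by
  classical
  rw [card_points_eq hΔ hd, ← Finset.add_sum_erase _ _ (Finset.mem_univ (0 : F))]
  have h0 : (Finset.univ.filter fun y : F => y ^ 2 = 0 ^ 3 + a * 0 ^ 2 + b * 0).card = 1 := by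
    rw [Finset.card_eq_one]
    exact ⟨0, by ext y; simp⟩
  have hS : ∑ x ∈ Finset.univ.erase (0 : F),
      (Finset.univ.filter fun y : F => y ^ 2 = x ^ 3 + a * x ^ 2 + b * x).card =
      (Finset.univ.filter fun x : F =>
        x ≠ 0 ∧ ∃ y : F, y ^ 2 = x ^ 3 + a * x ^ 2 + b * x).card * 2 := by
    rw [← smul_eq_mul, ← Finset.sum_const]
    symm
    refine Finset.sum_subset_zero_on_sdiff (fun x hx => ?_) (fun x hx => ?_) (fun x hx => ?_)
    · simpa using (Finset.mem_filter.mp hx).2.1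
    · simp only [Finset.mem_sdiff, Finset.mem_erase, Finset.mem_filter, Finset.mem_univ,
        and_true, true_and, not_and, not_exists] at hx
      simpa [Finset.filter_eq_empty_iff] using hx.2 hx.1
    · obtain ⟨hx0, h⟩ := (Finset.mem_filter.mp hx).2
      exact (card_fiber hd hx0 h).symm
  obtain ⟨k, hk⟩ := even_card_abscissas (a := a) hb
  rw [h0, hS, hk]
  omega
end

section
/- Let F be a finite field of odd cardinality and a, b ∈ F with b·(a² − 4b) ≠ 0. If b is a square in F, then 4 divides #E_{a,b}(F). -/
open WeierstrassCurve.Affine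

/-- The image of `P` in the quotient by `⟨T⟩`, a group of order two, has order two. -/
lemma four_dvd_card_of_double_mem {G : Type*} [AddCommGroup G] {T P : G} (hT : T ≠ 0)
    (hTT : T + T = 0) (hP : P ≠ 0) (hPT : P ≠ T) (hPP : P + P = 0 ∨ P + P = T) :
    4 ∣ Nat.card G := by
  have hord : addOrderOf T = 2 := addOrderOf_eq_prime (by rw [two_nsmul, hTT]) hT
  have hmem : P ∉ AddSubgroup.zmultiples T := by
    rintro ⟨n, rfl⟩
    obtain ⟨k, rfl | rfl⟩ := Int.even_or_odd' n
    · exact hP (by simp [mul_comm 2 k, mul_zsmul, two_zsmul, hTT])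
    · exact hPT (by simp [add_zsmul, mul_comm 2 k, mul_zsmul, two_zsmul, hTT])
  have hquot : addOrderOf (P : G ⧸ AddSubgroup.zmultiples T) = 2 := by
    refine addOrderOf_eq_prime ?_ fun h ↦ hmem ((QuotientAddGroup.eq_zero_iff P).mp h)
    rw [two_nsmul, ← QuotientAddGroup.mk_add, QuotientAddGroup.eq_zero_iff]
    rcases hPP with h | h <;> rw [h]
    · exact zero_mem _
    · exact AddSubgroup.mem_zmultiples T
  have hindex : 2 ∣ (AddSubgroup.zmultiples T).index := by
    rw [AddSubgroup.index_eq_card, ← hquot]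
    exact addOrderOf_dvd_natCard _
  rw [← (AddSubgroup.zmultiples T).index_mul_card, Nat.card_zmultiples, hord]
  exact Nat.mul_dvd_mul_right hindex 2

section

variable {F : Type*} [Field F] {a b : F}

lemma nonsingular_Eab (h2 : (2 : F) ≠ 0) (hΔ : b * (a ^ 2 - 4 * b) ≠ 0) {x y : F}
    (h : y ^ 2 = x ^ 3 + a * x ^ 2 + b * x) : (Eab a b).Nonsingular x y := by
  refine (equation_iff_nonsingular_of_Δ_ne_zero ?_).mp ?_
  · have hdisc : (Eab a b).Δ = 2 ^ 4 * b * (b * (a ^ 2 - 4 * b)) := by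
      simp only [Eab, WeierstrassCurve.Δ, WeierstrassCurve.b₂, WeierstrassCurve.b₄,
        WeierstrassCurve.b₆, WeierstrassCurve.b₈]
      ring
    rw [hdisc]
    exact mul_ne_zero (mul_ne_zero (pow_ne_zero _ h2) (left_ne_zero_of_mul hΔ)) hΔ
  · rw [equation_iff]
    simpa [Eab] using h

lemma four_dvd_card_of_isSquare_add (h2 : (2 : F) ≠ 0) (hΔ : b * (a ^ 2 - 4 * b) ≠ 0) {c : F}
    (hc : b = c * c) (hs : IsSquare (a + 2 * c)) : 4 ∣ Nat.card (Eab a b).Point := by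
  classical
  obtain ⟨r, hr⟩ := hs
  have hc0 : c ≠ 0 := by rintro rfl; simp [hc] at hΔ
  have hr0 : r ≠ 0 := by
    rintro rfl
    apply hΔ
    rw [hc]
    linear_combination c * c * (a - 2 * c) * hr
  have hT : (Eab a b).Nonsingular 0 0 := nonsingular_Eab h2 hΔ (by ring)
  have hP : (Eab a b).Nonsingular c (c * r) :=
    nonsingular_Eab h2 hΔ (by rw [hc]; linear_combination -c ^ 2 * hr)
  have hne : c * r ≠ (Eab a b).negY c (c * r) := by
    simp only [negY, Eab]
    intro h
    exact mul_ne_zero h2 (mul_ne_zero hc0 hr0) (by linear_combination h)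
  -- The tangent line at `(c, cr)` is `y = r x`.
  have hslope : (Eab a b).slope c c (c * r) (c * r) = r := by
    rw [slope_of_Y_ne rfl hne]
    have hden : c * r - (Eab a b).negY c (c * r) ≠ 0 := sub_ne_zero.mpr hne
    rw [div_eq_iff hden]
    simp only [negY, Eab, hc]
    linear_combination 2 * c * hr
  refine four_dvd_card_of_double_mem (T := .some 0 0 hT) (P := .some c (c * r) hP)
    (Point.some_ne_zero hT) (Point.add_self_of_Y_eq (by simp [negY, Eab]))
    (Point.some_ne_zero hP) (by simp [hc0]) (Or.inr ?_)
  have hX : (Eab a b).addX c c r = 0 := by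
    simp only [addX, Eab]
    linear_combination -hr
  rw [Point.add_self_of_Y_ne hne, Point.some.injEq, hslope]
  refine ⟨hX, ?_⟩
  rw [addY, negAddY, hX]
  simp only [negY, Eab]
  ring

lemma four_dvd_card_of_isSquare_disc (h2 : (2 : F) ≠ 0) (hΔ : b * (a ^ 2 - 4 * b) ≠ 0)
    (hs : IsSquare (a ^ 2 - 4 * b)) : 4 ∣ Nat.card (Eab a b).Point := by
  classical
  obtain ⟨s, hs⟩ := hs
  obtain ⟨x, hx⟩ : ∃ x : F, x ^ 2 + a * x + b = 0 := by
    refine ⟨(-a + s) / 2, ?_⟩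
    field_simp
    linear_combination -hs
  have hx0 : x ≠ 0 := by
    rintro rfl
    exact left_ne_zero_of_mul hΔ (by linear_combination hx)
  have hT : (Eab a b).Nonsingular 0 0 := nonsingular_Eab h2 hΔ (by ring)
  have hP : (Eab a b).Nonsingular x 0 := nonsingular_Eab h2 hΔ (by linear_combination -x * hx)
  exact four_dvd_card_of_double_mem (T := .some 0 0 hT) (P := .some x 0 hP)
    (Point.some_ne_zero hT) (Point.add_self_of_Y_eq (by simp [negY, Eab]))
    (Point.some_ne_zero hP) (by simp [hx0])
    (Or.inl (Point.add_self_of_Y_eq (by simp [negY, Eab])))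

end

/-- If `b` is a square in a finite field `F` of odd cardinality, then
`4 ∣ #E_{a,b}(F)`. -/
theorem stmt14 (F : Type*) [Field F] [Fintype F] (hodd : Odd (Fintype.card F))
    (a b : F) (hΔ : b * (a ^ 2 - 4 * b) ≠ 0)
    (hb : IsSquare b) :
    4 ∣ Nat.card (Eab a b).Point := by
  classical
  have h2 : (2 : F) ≠ 0 := by
    refine Ring.two_ne_zero fun h ↦ ?_
    have := FiniteField.even_card_of_char_two h
    have := Nat.odd_iff.mp hodd
    omega
  obtain ⟨c, hc⟩ := hb
  by_cases hplus : IsSquare (a + 2 * c)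
  · exact four_dvd_card_of_isSquare_add h2 hΔ hc hplus
  by_cases hminus : IsSquare (a - 2 * c)
  · exact four_dvd_card_of_isSquare_add h2 hΔ (c := -c) (by rw [hc]; ring)
      (by simpa [sub_eq_add_neg] using hminus)
  refine four_dvd_card_of_isSquare_disc h2 hΔ ?_
  rw [← quadraticChar_one_iff_isSquare (right_ne_zero_of_mul hΔ),
    show a ^ 2 - 4 * b = (a + 2 * c) * (a - 2 * c) by rw [hc]; ring, map_mul,
    quadraticChar_neg_one_iff_not_isSquare.mpr hplus,
    quadraticChar_neg_one_iff_not_isSquare.mpr hminus]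
  norm_num
end
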